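/- Suppose lim_{x→a⁺} s(x) = ∞, the right boundary b is natural (lim_{x→b} s(x)·M[a,x] = ∞ and ∫_{x₀}^{b} M[x₀,v] s(v) dv = ∞), μ extends continuously to x = a with a finite value μ(a), there exists x̂₀ ∈ (a,b) such that μ is strictly increasing on (a, x̂₀) and both c and μ are concave on (x̂₀, b), and there exists a pair (w̃,ỹ) with a < w̃ < ỹ < b and F(w̃,ỹ) > γ c̄(b). Then there exist points x̂ ≤ x̃ in (a,b) such that the revenue rate r(x) = γ c(x) + p μ(x) is strictly increasing on (a, x̂), constant on (x̂, x̃), and strictly decreasing on (x̃, b). -/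

import Mathlib

open MeasureTheory Filter Set Topology
open scoped Classical

noncomputable section

/-- The state interval `(a, b)` where `a` is real and `b ∈ (a, ∞]`. -/
def stInt (a : ℝ) (b : EReal) : Set ℝ := {x : ℝ | a < x ∧ (x : EReal) < b}

/-- The filter of approach to the right endpoint `b ∈ (a, ∞]`:
`atTop` when `b = ∞`, and the left-neighborhood filter of `b` otherwise. -/
def atB (b : EReal) : Filter ℝ :=
  if b = ⊤ then Filter.atTop else nhdsWithin b.toReal (Set.Iio b.toReal)

/-- The scale density `s(x) = exp(-∫_{x₀}^x 2μ/σ²)`. -/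
def sDen (μ σ : ℝ → ℝ) (x₀ x : ℝ) : ℝ :=
  Real.exp (-(∫ y in x₀..x, 2 * μ y / (σ y) ^ 2))

/-- The speed density `m(x) = 2/(σ(x)² s(x))`. -/
def mDen (μ σ : ℝ → ℝ) (x₀ x : ℝ) : ℝ :=
  2 / ((σ x) ^ 2 * sDen μ σ x₀ x)

/-- `M[a,x] = ∫_a^x m(u) du`. -/
def Mab (μ σ : ℝ → ℝ) (x₀ a x : ℝ) : ℝ :=
  ∫ u in Set.Ioo a x, mDen μ σ x₀ u

/-- The time potential `ξ(x) = ∫_{x₀}^x M[a,v] s(v) dv`. -/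
def xiF (μ σ : ℝ → ℝ) (x₀ a x : ℝ) : ℝ :=
  ∫ v in x₀..x, Mab μ σ x₀ a v * sDen μ σ x₀ v

/-- The running reward potential `g(x) = ∫_{x₀}^x (∫_a^v c(u) m(u) du) s(v) dv`. -/
def gF (μ σ c : ℝ → ℝ) (x₀ a x : ℝ) : ℝ :=
  ∫ v in x₀..x, (∫ u in Set.Ioo a v, c u * mDen μ σ x₀ u) * sDen μ σ x₀ v

/-- `h(x) = (∫_a^x (γ c(u) + p μ(u)) m(u) du) / M[a,x]`. -/
def hF (μ σ c : ℝ → ℝ) (x₀ a p γ x : ℝ) : ℝ :=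
  (∫ u in Set.Ioo a x, (γ * c u + p * μ u) * mDen μ σ x₀ u) / Mab μ σ x₀ a x

/-- The long-term average reward `F(w,y)` of the `(w,y)`-impulse policy. -/
def FF (μ σ c : ℝ → ℝ) (x₀ a p K γ w y : ℝ) : ℝ :=
  (p * (y - w) - K + γ * (gF μ σ c x₀ a y - gF μ σ c x₀ a w)) /
    (xiF μ σ x₀ a y - xiF μ σ x₀ a w)

/-- `c̄(b)`: equals `⟨c,π⟩` when `M[a,b] < ∞` and the boundary value `c(b)` otherwise. -/
def cbar (μ σ c : ℝ → ℝ) (x₀ a : ℝ) (b : EReal) (cb : ℝ) : ℝ :=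
  if MeasureTheory.IntegrableOn (mDen μ σ x₀) (stInt a b) MeasureTheory.volume then
    (∫ u in stInt a b, c u * mDen μ σ x₀ u) / (∫ u in stInt a b, mDen μ σ x₀ u)
  else cb


lemma aux_st_between {a : ℝ} {b : EReal} {x y : ℝ} (hx : a < x) (hxy : x ≤ y)
    (hy : y ∈ stInt a b) : x ∈ stInt a b :=
  ⟨hx, lt_of_le_of_lt (EReal.coe_le_coe_iff.2 hxy) hy.2⟩

lemma aux_atB_neBot (b : EReal) : (atB b).NeBot := by
  unfold atB
  split_ifs <;> infer_instance

lemma aux_atB_ev {a : ℝ} {b : EReal} {v : ℝ} (hv : v ∈ stInt a b) :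
    ∀ᶠ x in atB b, v < x ∧ x ∈ stInt a b := by
  unfold atB
  split_ifs with h
  · filter_upwards [eventually_gt_atTop v] with x hx
    exact ⟨hx, hv.1.trans hx, by rw [h]; exact EReal.coe_lt_top x⟩
  · have hb : b ≠ ⊥ := fun h' => by
      have := hv.2
      rw [h'] at this
      exact not_lt_bot this
    have hc : (b.toReal : EReal) = b := EReal.coe_toReal h hb
    have hvb : v < b.toReal := by
      have := hv.2
      rw [← hc] at this
      exact EReal.coe_lt_coe_iff.1 this
    filter_upwards [Ioo_mem_nhdsLT hvb] with x hx
    refine ⟨hx.1, hv.1.trans hx.1, ?_⟩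
    rw [← hc]
    exact EReal.coe_lt_coe_iff.2 hx.2

lemma aux_isOpen (a : ℝ) (b : EReal) : IsOpen (stInt a b) := by
  have : stInt a b = Ioi a ∩ {x : ℝ | (x : EReal) < b} := rfl
  rw [this]
  exact isOpen_Ioi.inter (isOpen_lt continuous_coe_real_ereal continuous_const)

/-- Averages of an increasing function increase with the window. -/
lemma aux_avg {f m : ℝ → ℝ} {S T : Set ℝ} {k : ℝ} (hST : S ⊆ T) (hS : MeasurableSet S)
    (hT : MeasurableSet T) (hm : ∀ x ∈ T, 0 ≤ m x) (hmi : IntegrableOn m T)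
    (hfi : IntegrableOn (fun x => f x * m x) T)
    (h1 : ∀ x ∈ S, f x ≤ k) (h2 : ∀ x ∈ T \ S, k ≤ f x) :
    (∫ x in S, f x * m x) * (∫ x in T, m x) ≤ (∫ x in T, f x * m x) * (∫ x in S, m x) := by
  have e1 : ∫ x in T, m x = (∫ x in S, m x) + ∫ x in T \ S, m x := by
    have := setIntegral_sdiff hS hmi hST
    linarith
  have e2 : ∫ x in T, f x * m x = (∫ x in S, f x * m x) + ∫ x in T \ S, f x * m x := by
    have := setIntegral_sdiff hS hfi hST
    linarith
  have i1 : ∫ x in S, f x * m x ≤ k * ∫ x in S, m x := by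
    rw [← integral_const_mul]
    exact setIntegral_mono_on (hfi.mono_set hST) ((hmi.mono_set hST).const_mul k) hS
      (fun x hx => mul_le_mul_of_nonneg_right (h1 x hx) (hm x (hST hx)))
  have i2 : k * ∫ x in T \ S, m x ≤ ∫ x in T \ S, f x * m x := by
    rw [← integral_const_mul]
    exact setIntegral_mono_on ((hmi.mono_set sdiff_subset).const_mul k) (hfi.mono_set sdiff_subset)
      (hT.diff hS) (fun x hx => mul_le_mul_of_nonneg_right (h2 x hx) (hm x hx.1))
  have p1 : 0 ≤ ∫ x in S, m x := setIntegral_nonneg hS fun x hx => hm x (hST hx)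
  have p2 : 0 ≤ ∫ x in T \ S, m x := setIntegral_nonneg (hT.diff hS) fun x hx => hm x hx.1
  rw [e1, e2]
  nlinarith [mul_le_mul_of_nonneg_right i1 p2, mul_le_mul_of_nonneg_right i2 p1]

/-- Shape lemma: strictly increasing, then concave, not monotone. -/
lemma aux_shape {a : ℝ} {b : EReal} {r : ℝ → ℝ} {z : ℝ} (hz : z ∈ stInt a b)
    (hr : ContinuousOn r (stInt a b)) (hmono : StrictMonoOn r (Ioo a z))
    (hconc : ConcaveOn ℝ {x : ℝ | z < x ∧ (x : EReal) < b} r)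
    (hnot : ¬ MonotoneOn r (stInt a b)) :
    ∃ xh xt : ℝ, xh ∈ stInt a b ∧ xt ∈ stInt a b ∧ xh ≤ xt ∧
      StrictMonoOn r (Ioo a xh) ∧
      (∀ u ∈ Ioo xh xt, ∀ v ∈ Ioo xh xt, r u = r v) ∧
      StrictAntiOn r {x : ℝ | xt < x ∧ (x : EReal) < b} := by
  have hrz : ContinuousAt r z := hr.continuousAt ((aux_isOpen a b).mem_nhds hz)
  have hlt : ∀ x, a < x → x < z → r x < r z := by
    intro x hax hxz
    obtain ⟨x', h1, h2⟩ := exists_between hxz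
    have hxx : r x < r x' := hmono ⟨hax, hxz⟩ ⟨hax.trans h1, h2⟩ h1
    have : r x' ≤ r z := by
      refine ge_of_tendsto (hrz.tendsto.mono_left (nhdsWithin_le_nhds (s := Iio z))) ?_
      filter_upwards [Ioo_mem_nhdsLT h2] with t ht
      exact (hmono ⟨hax.trans h1, h2⟩ ⟨(hax.trans h1).trans ht.1, ht.2⟩ ht.1).le
    linarith
  have hc3' : ∀ x y w : ℝ, z < x → x < y → y < w → (w : EReal) < b →
      (w - y) * r x + (y - x) * r w ≤ (w - x) * r y := by
    intro x y w h1 h2 h3 h4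
    have hxw : 0 < w - x := by linarith
    have hxS : x ∈ {x : ℝ | z < x ∧ (x : EReal) < b} :=
      ⟨h1, lt_trans (EReal.coe_lt_coe_iff.2 (h2.trans h3)) h4⟩
    have hwS : w ∈ {x : ℝ | z < x ∧ (x : EReal) < b} := ⟨by linarith, h4⟩
    have hA0 : 0 ≤ (w - y) / (w - x) := div_nonneg (by linarith) hxw.le
    have hB0 : 0 ≤ (y - x) / (w - x) := div_nonneg (by linarith) hxw.le
    have hAB : (w - y) / (w - x) + (y - x) / (w - x) = 1 := by field_simp; ring
    have := hconc.2 hxS hwS hA0 hB0 hAB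
    simp only [smul_eq_mul] at this
    have e : (w - y) / (w - x) * x + (y - x) / (w - x) * w = y := by field_simp; ring
    rw [e] at this
    have h5 := mul_le_mul_of_nonneg_left this hxw.le
    have e2 : (w - x) * ((w - y) / (w - x) * r x + (y - x) / (w - x) * r w)
        = (w - y) * r x + (y - x) * r w := by field_simp
    linarith
  have hc3 : ∀ x y w : ℝ, z ≤ x → x < y → y < w → (w : EReal) < b →
      (w - y) * r x + (y - x) * r w ≤ (w - x) * r y := by
    intro x y w h1 h2 h3 h4
    rcases h1.lt_or_eq with h1 | rfl
    · exact hc3' x y w h1 h2 h3 h4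
    · have hid : Tendsto (fun t : ℝ => t) (𝓝[>] z) (𝓝 z) := tendsto_id.mono_left nhdsWithin_le_nhds
      have hrz' : Tendsto r (𝓝[>] z) (𝓝 (r z)) := hrz.tendsto.mono_left nhdsWithin_le_nhds
      refine le_of_tendsto_of_tendsto
        ((hrz'.const_mul (w - y)).add ((hid.const_sub y).mul_const (r w)))
        ((hid.const_sub w).mul_const (r y)) ?_
      filter_upwards [Ioo_mem_nhdsGT h2] with t ht
      exact hc3' t y w ht.1 ht.2 h3 h4
  obtain ⟨u, v, hzu, huv, hvb, hruv⟩ :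
      ∃ u v : ℝ, z ≤ u ∧ u < v ∧ v ∈ stInt a b ∧ r v < r u := by
    unfold MonotoneOn at hnot
    push Not at hnot
    obtain ⟨u, hu, v, hv, huv, hr'⟩ := hnot
    have huv' : u < v := lt_of_le_of_ne huv (by rintro rfl; exact lt_irrefl _ hr')
    rcases le_or_gt z u with h | h
    · exact ⟨u, v, h, huv', hv, hr'⟩
    · have h1 := hlt u hu.1 h
      rcases lt_trichotomy v z with h2 | h2 | h2
      · exact absurd (hmono ⟨hu.1, h⟩ ⟨hv.1, h2⟩ huv') (by linarith)
      · subst h2; exact absurd h1 (by linarith)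
      · exact ⟨z, v, le_rfl, h2, hv, by linarith⟩
  have hsub : Icc z v ⊆ stInt a b := fun x hx => aux_st_between (hz.1.trans_le hx.1) hx.2 hvb
  have hcI : ContinuousOn r (Icc z v) := hr.mono hsub
  obtain ⟨x1, hx1, hmax⟩ := isCompact_Icc.exists_isMaxOn ⟨u, hzu, huv.le⟩ hcI
  set A : Set ℝ := Icc z v ∩ r ⁻¹' {r x1} with hA
  have hAc : IsCompact A := 
    isCompact_Icc.of_isClosed_subset (hcI.preimage_isClosed_of_isClosed isClosed_Icc isClosed_singleton)
      inter_subset_left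
  have hAne : A.Nonempty := ⟨x1, hx1, rfl⟩
  obtain ⟨xh, hxh, hxhm⟩ := hAc.exists_isLeast hAne
  obtain ⟨xt, hxt, hxtm⟩ := hAc.exists_isGreatest hAne
  have hxhr : r xh = r x1 := hxh.2
  have hxtr : r xt = r x1 := hxt.2
  have hle : ∀ x, z ≤ x → x ≤ v → r x ≤ r x1 := fun x h1 h2 => hmax ⟨h1, h2⟩
  have hvlt : r v < r x1 := hruv.trans_le (hle u hzu huv.le)
  have hxtv : xt < v := lt_of_le_of_ne hxt.1.2 (by rintro rfl; linarith)
  have hltt : ∀ x, xt < x → (x : EReal) < b → r x < r x1 := by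
    intro x h1 h2
    rcases le_or_gt x v with h | h
    · refine lt_of_le_of_ne (hle x (hxt.1.1.trans h1.le) h) fun he => ?_
      exact absurd (hxtm ⟨⟨hxt.1.1.trans h1.le, h⟩, he⟩) (by linarith)
    · have := hc3 xt v x hxt.1.1 hxtv h h2
      by_contra hcon
      push Not at hcon
      rw [hxtr] at this
      have h3 := mul_le_mul_of_nonneg_left hcon (by linarith : (0:ℝ) ≤ v - xt)
      have h4 := mul_lt_mul_of_pos_left hvlt (by linarith : (0:ℝ) < x - xt)
      nlinarith
  refine ⟨xh, xt, hsub hxh.1, hsub hxt.1, hxhm hxt, ?_, ?_, ?_⟩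
  · intro x hx y hy hxy
    rcases lt_or_ge x z with h | h
    · rcases lt_or_ge y z with h' | h'
      · exact hmono ⟨hx.1, h⟩ ⟨hy.1, h'⟩ hxy
      · have h1 := hlt x hx.1 h
        rcases h'.lt_or_eq with h' | rfl
        · have hzh : z < xh := h'.trans hy.2
          have h2 := hc3 z y xh le_rfl h' hy.2 (hsub hxh.1).2
          have h3 := hle z le_rfl (hx1.1.trans hx1.2)
          rw [hxhr] at h2
          have h4 := mul_le_mul_of_nonneg_left h3 (by linarith : (0:ℝ) ≤ y - z)
          have h5 : r z ≤ r y := by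
            by_contra hcon
            push Not at hcon
            have := mul_lt_mul_of_pos_left hcon (by linarith : (0:ℝ) < xh - z)
            nlinarith
          exact h1.trans_le h5
        · exact h1
    · have hyv : y ≤ v := hy.2.le.trans hxh.1.2
      have hzy : z ≤ y := h.trans hxy.le
      have hym : r y < r x1 := by
        refine lt_of_le_of_ne (hle y hzy hyv) fun he => ?_
        exact absurd (hxhm ⟨⟨hzy, hyv⟩, he⟩) (by simpa using hy.2)
      have h2 := hc3 x y xh h hxy hy.2 (hsub hxh.1).2
      rw [hxhr] at h2
      by_contra hcon
      simp only [not_lt] at hcon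
      have h3 := mul_le_mul_of_nonneg_left hcon (by linarith [hy.2] : (0:ℝ) ≤ xh - y)
      have h4 := mul_lt_mul_of_pos_left hym (by linarith : (0:ℝ) < y - x)
      nlinarith
  · have key : ∀ y ∈ Ioo xh xt, r y = r x1 := by
      intro y hy
      have h2 := hc3 xh y xt hxh.1.1 hy.1 hy.2 (hsub hxt.1).2
      rw [hxhr, hxtr] at h2
      refine le_antisymm (hle y (hxh.1.1.trans hy.1.le) (hy.2.le.trans hxt.1.2)) ?_
      have : (0:ℝ) < xt - xh := by linarith [hy.1, hy.2]
      by_contra hcon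
      push Not at hcon
      have := mul_lt_mul_of_pos_left hcon this
      nlinarith
    intro u hu v hv
    rw [key u hu, key v hv]
  · intro x hx y hy hxy
    have h1 := hltt x hx.1 hx.2
    have h2 := hc3 xt x y hxt.1.1 hx.1 hxy hy.2
    rw [hxtr] at h2
    by_contra hcon
    simp only [not_lt] at hcon
    have hx' := hx.1
    have h3 := mul_le_mul_of_nonneg_left hcon (by linarith : (0:ℝ) ≤ x - xt)
    have h4 := mul_lt_mul_of_pos_left h1 (by linarith : (0:ℝ) < y - x)
    nlinarith

section main
variable {a : ℝ} {b : EReal} {μ σ : ℝ → ℝ} {x₀ : ℝ}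

lemma aux_q_cont (hμcont : ContinuousOn μ (stInt a b)) (hσcont : ContinuousOn σ (stInt a b))
    (hσpos : ∀ x ∈ stInt a b, 0 < (σ x) ^ 2) :
    ContinuousOn (fun y => 2 * μ y / (σ y) ^ 2) (stInt a b) :=
  (hμcont.const_mul 2 |> fun h => h).div (hσcont.pow 2) fun x hx => (hσpos x hx).ne'

lemma aux_uIcc {x y : ℝ} (hx : x ∈ stInt a b) (hy : y ∈ stInt a b) : uIcc x y ⊆ stInt a b := by
  intro t ht
  rcases le_total x y with h | h
  · rw [uIcc_of_le h] at ht; exact aux_st_between (hx.1.trans_le ht.1) ht.2 hy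
  · rw [uIcc_of_ge h] at ht; exact aux_st_between (hy.1.trans_le ht.1) ht.2 hx

lemma aux_int_deriv (hx₀ : x₀ ∈ stInt a b) {q : ℝ → ℝ} (hq : ContinuousOn q (stInt a b))
    {x : ℝ} (hx : x ∈ stInt a b) : HasDerivAt (fun x => ∫ y in x₀..x, q y) (q x) x := by
  have hn := (aux_isOpen a b).mem_nhds hx
  refine intervalIntegral.integral_hasDerivAt_right
    (hq.mono (aux_uIcc hx₀ hx)).intervalIntegrable ?_ (hq.continuousAt hn)
  exact hq.stronglyMeasurableAtFilter (aux_isOpen a b) x hx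

lemma aux_s_pos (x : ℝ) : 0 < sDen μ σ x₀ x := Real.exp_pos _

lemma aux_sinv_deriv (hx₀ : x₀ ∈ stInt a b)
    (hμcont : ContinuousOn μ (stInt a b)) (hσcont : ContinuousOn σ (stInt a b))
    (hσpos : ∀ x ∈ stInt a b, 0 < (σ x) ^ 2) {x : ℝ} (hx : x ∈ stInt a b) :
    HasDerivAt (fun x => (sDen μ σ x₀ x)⁻¹) (μ x * mDen μ σ x₀ x) x := by
  have h := (aux_int_deriv hx₀ (aux_q_cont hμcont hσcont hσpos) hx).exp
  have e : (fun x => (sDen μ σ x₀ x)⁻¹) = fun x => Real.exp (∫ y in x₀..x, 2 * μ y / (σ y) ^ 2) := by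
    funext t
    rw [sDen, Real.exp_neg, inv_inv]
  rw [e]
  convert h using 1
  have := (hσpos x hx).ne'
  rw [mDen, sDen, Real.exp_neg]
  have := (Real.exp_pos (∫ y in x₀..x, 2 * μ y / (σ y) ^ 2)).ne'
  field_simp

lemma aux_s_cont (hx₀ : x₀ ∈ stInt a b)
    (hμcont : ContinuousOn μ (stInt a b)) (hσcont : ContinuousOn σ (stInt a b))
    (hσpos : ∀ x ∈ stInt a b, 0 < (σ x) ^ 2) : ContinuousOn (sDen μ σ x₀) (stInt a b) := by
  intro x hx
  have h := (aux_int_deriv hx₀ (aux_q_cont hμcont hσcont hσpos) hx).neg.exp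
  exact h.continuousAt.continuousWithinAt

lemma aux_m_pos (hσpos : ∀ x ∈ stInt a b, 0 < (σ x) ^ 2) {x : ℝ} (hx : x ∈ stInt a b) :
    0 < mDen μ σ x₀ x := by
  have := hσpos x hx
  have := aux_s_pos (μ := μ) (σ := σ) (x₀ := x₀) x
  unfold mDen
  positivity

lemma aux_Ioo_sub {x : ℝ} (hx : x ∈ stInt a b) : Ioo a x ⊆ stInt a b :=
  fun _ ht => aux_st_between ht.1 ht.2.le hx

lemma aux_M_pos (hσpos : ∀ x ∈ stInt a b, 0 < (σ x) ^ 2)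
    (hMfin : ∀ x ∈ stInt a b, IntegrableOn (mDen μ σ x₀) (Set.Ioo a x)) {x : ℝ}
    (hx : x ∈ stInt a b) : 0 < Mab μ σ x₀ a x := by
  unfold Mab
  rw [← integral_Ioc_eq_integral_Ioo, ← intervalIntegral.integral_of_le hx.1.le]
  refine intervalIntegral.intervalIntegral_pos_of_pos_on ?_
    (fun t ht => aux_m_pos hσpos (aux_Ioo_sub hx ht)) hx.1
  rw [intervalIntegrable_iff_integrableOn_Ioo_of_le hx.1.le]
  exact hMfin x hx

/-- bounded continuous times integrable -/
lemma aux_bdd_int {f m : ℝ → ℝ} {S : Set ℝ} {C : ℝ} (hS : MeasurableSet S) (hf : ContinuousOn f S)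
    (hm : IntegrableOn m S) (hC : ∀ x ∈ S, |f x| ≤ C) : IntegrableOn (fun x => f x * m x) S := by
  refine Integrable.bdd_mul (c := C) hm (hf.aestronglyMeasurable hS) ?_
  exact (ae_restrict_iff' hS).2 (Eventually.of_forall fun x hx => by simpa using hC x hx)

lemma aux_mu_bdd (hμcont : ContinuousOn μ (stInt a b)) {μa : ℝ}
    (hμa : Tendsto μ (𝓝[>] a) (𝓝 μa)) {x : ℝ} (hx : x ∈ stInt a b) :
    ∃ C, ∀ t ∈ Ioo a x, |μ t| ≤ C := by
  have h1 : ∀ᶠ t in 𝓝[>] a, |μ t| < |μa| + 1 := hμa.abs.eventually_lt_const (by linarith)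
  obtain ⟨e, he, hsub⟩ := mem_nhdsGT_iff_exists_Ioo_subset.1 h1
  have he' : a < e := he
  obtain ⟨d, hd1, hd2⟩ := exists_between he'
  have hI : Icc d x ⊆ stInt a b := fun t ht => aux_st_between (hd1.trans_le ht.1) ht.2 hx
  obtain ⟨C, hC⟩ := isCompact_Icc.exists_bound_of_continuousOn (hμcont.mono hI)
  refine ⟨max (|μa| + 1) C, fun t ht => ?_⟩
  rcases lt_or_ge t e with h | h
  · have h2 : |μ t| < |μa| + 1 := hsub ⟨ht.1, h⟩
    exact h2.le.trans (le_max_left _ _)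
  · exact (hC t ⟨hd2.le.trans h, ht.2.le⟩).trans (le_max_right _ _)

lemma aux_mu_int (hx₀ : x₀ ∈ stInt a b)
    (hμcont : ContinuousOn μ (stInt a b)) (hσcont : ContinuousOn σ (stInt a b))
    (hσpos : ∀ x ∈ stInt a b, 0 < (σ x) ^ 2)
    (hsa : Tendsto (sDen μ σ x₀) (𝓝[>] a) atTop) {x : ℝ} (hx : x ∈ stInt a b)
    (hi : IntegrableOn (fun t => μ t * mDen μ σ x₀ t) (Ioo a x)) :
    ∫ t in Ioo a x, μ t * mDen μ σ x₀ t = (sDen μ σ x₀ x)⁻¹ := by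
  rw [← integral_Ioc_eq_integral_Ioo, ← intervalIntegral.integral_of_le hx.1.le]
  have hc := (aux_sinv_deriv hx₀ hμcont hσcont hσpos hx).continuousAt
  have := intervalIntegral.integral_eq_sub_of_hasDerivAt_of_tendsto hx.1
    (f := fun x => (sDen μ σ x₀ x)⁻¹) (f' := fun t => μ t * mDen μ σ x₀ t) (fa := 0)
    (fun t ht => aux_sinv_deriv hx₀ hμcont hσcont hσpos (aux_Ioo_sub hx ht))
    (by rw [intervalIntegrable_iff_integrableOn_Ioo_of_le hx.1.le]; exact hi)
    hsa.inv_tendsto_atTop (hc.tendsto.mono_left nhdsWithin_le_nhds)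
  rw [this, sub_zero]

lemma aux_prim_cont {f : ℝ → ℝ} (hf : ∀ x ∈ stInt a b, IntegrableOn f (Ioo a x)) :
    ContinuousOn (fun v => ∫ u in Ioo a v, f u) (stInt a b) := by
  intro x hx
  obtain ⟨y, hxy, hy⟩ : ∃ y, x < y ∧ y ∈ stInt a b := by
    haveI := aux_atB_neBot b
    exact (aux_atB_ev hx).exists
  have h := intervalIntegral.continuousOn_primitive (μ := volume)
    ((integrableOn_Icc_iff_integrableOn_Ioo).2 (hf y hy))
  simp only [integral_Ioc_eq_integral_Ioo] at h
  exact (h.continuousAt (Icc_mem_nhds hx.1 hxy)).continuousWithinAt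

end main

theorem statement16    (a : ℝ) (b : EReal) (hab : (a : EReal) < b)
    (μ σ : ℝ → ℝ) (x₀ : ℝ) (hx₀ : x₀ ∈ stInt a b)
    (hμcont : ContinuousOn μ (stInt a b)) (hσcont : ContinuousOn σ (stInt a b))
    (hσpos : ∀ x ∈ stInt a b, 0 < (σ x) ^ 2)
    (hMfin : ∀ x ∈ stInt a b, IntegrableOn (mDen μ σ x₀) (Set.Ioo a x))
    (hsa : Tendsto (sDen μ σ x₀) (𝓝[>] a) atTop)
    (hsMb : Tendsto (fun x => sDen μ σ x₀ x * Mab μ σ x₀ a x) (atB b) atTop)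
    (hbnat : Tendsto (xiF μ σ x₀ a) (atB b) atTop)
    (μa : ℝ) (hμa : Tendsto μ (𝓝[>] a) (𝓝 μa))
    (c : ℝ → ℝ) (hccont : ContinuousOn c (stInt a b))
    (hcnn : ∀ x ∈ stInt a b, 0 ≤ c x) (hcmono : MonotoneOn c (stInt a b))
    (ca cb : ℝ) (hca : Tendsto c (𝓝[>] a) (𝓝 ca)) (hcb : Tendsto c (atB b) (𝓝 cb))
    (hca0 : 0 ≤ ca) (hcacb : ca < cb)
    (xhat0 : ℝ) (hxhat0 : xhat0 ∈ stInt a b)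
    (hμmono : StrictMonoOn μ (Set.Ioo a xhat0))
    (hμconc : ConcaveOn ℝ {x : ℝ | xhat0 < x ∧ (x : EReal) < b} μ)
    (hcconc : ConcaveOn ℝ {x : ℝ | xhat0 < x ∧ (x : EReal) < b} c)
    (p K γ : ℝ) (hp : 0 < p) (hK : 0 < K) (hγ : 0 < γ)
    (hint : ∃ w y : ℝ, a < w ∧ w < y ∧ (y : EReal) < b ∧
      γ * cbar μ σ c x₀ a b cb < FF μ σ c x₀ a p K γ w y) :
    ∃ xh xt : ℝ, xh ∈ stInt a b ∧ xt ∈ stInt a b ∧ xh ≤ xt ∧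
      StrictMonoOn (fun x => γ * c x + p * μ x) (Set.Ioo a xh) ∧
      (∀ u ∈ Set.Ioo xh xt, ∀ v ∈ Set.Ioo xh xt,
        γ * c u + p * μ u = γ * c v + p * μ v) ∧
      StrictAntiOn (fun x => γ * c x + p * μ x) {x : ℝ | xt < x ∧ (x : EReal) < b} := by
  refine aux_shape hxhat0 ((hccont.const_mul γ).add (hμcont.const_mul p)) ?_ ?_ ?_
  · intro x hx y hy hxy
    have h1 := hμmono hx hy hxy
    have h2 := hcmono (aux_Ioo_sub hxhat0 hx) (aux_Ioo_sub hxhat0 hy) hxy.le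
    have := mul_lt_mul_of_pos_left h1 hp
    have := mul_le_mul_of_nonneg_left h2 hγ.le
    show γ * c x + p * μ x < γ * c y + p * μ y
    linarith
  · exact (hcconc.smul hγ.le).add (hμconc.smul hp.le)
  intro hmon
  haveI := aux_atB_neBot b
  have hccb : ∀ x ∈ stInt a b, c x ≤ cb := by
    intro x hx
    refine ge_of_tendsto hcb ?_
    filter_upwards [aux_atB_ev hx] with t ht
    exact hcmono hx ht.2 ht.1.le
  have hcabs : ∀ x ∈ stInt a b, |c x| ≤ cb := fun x hx => by
    rw [abs_of_nonneg (hcnn x hx)]; exact hccb x hx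
  have hmp : ∀ x ∈ stInt a b, 0 < mDen μ σ x₀ x := fun x hx => aux_m_pos hσpos hx
  have hMp : ∀ x ∈ stInt a b, 0 < Mab μ σ x₀ a x := fun x hx => aux_M_pos hσpos hMfin hx
  have hcm : ∀ x ∈ stInt a b, IntegrableOn (fun u => c u * mDen μ σ x₀ u) (Ioo a x) :=
    fun x hx => aux_bdd_int measurableSet_Ioo (hccont.mono (aux_Ioo_sub hx)) (hMfin x hx)
      fun t ht => hcabs t (aux_Ioo_sub hx ht)
  have hμm : ∀ x ∈ stInt a b, IntegrableOn (fun u => μ u * mDen μ σ x₀ u) (Ioo a x) := by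
    intro x hx
    obtain ⟨C, hC⟩ := aux_mu_bdd hμcont hμa hx
    exact aux_bdd_int measurableSet_Ioo (hμcont.mono (aux_Ioo_sub hx)) (hMfin x hx) hC
  have hrm : ∀ x ∈ stInt a b,
      IntegrableOn (fun u => (γ * c u + p * μ u) * mDen μ σ x₀ u) (Ioo a x) := by
    intro x hx
    have : IntegrableOn _ (Ioo a x) := ((hcm x hx).const_mul γ).add ((hμm x hx).const_mul p)
    refine IntegrableOn.congr_fun this (fun t _ => ?_) measurableSet_Ioo
    simp only [Pi.add_apply]
    ring
  set G : ℝ → ℝ := fun v => ∫ u in Ioo a v, c u * mDen μ σ x₀ u with hG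
  have hrI : ∀ x ∈ stInt a b, ∫ u in Ioo a x, (γ * c u + p * μ u) * mDen μ σ x₀ u
      = γ * G x + p * (sDen μ σ x₀ x)⁻¹ := by
    intro x hx
    rw [← aux_mu_int hx₀ hμcont hσcont hσpos hsa hx (hμm x hx), hG]
    simp only
    rw [← integral_const_mul, ← integral_const_mul,
      ← integral_add ((hcm x hx).const_mul γ) ((hμm x hx).const_mul p)]
    refine integral_congr_ae (Eventually.of_forall fun t => ?_)
    simp only
    ring
  set cB := cbar μ σ c x₀ a b cb with hcB
  -- the average of `c` is at most `cB`
  have hGle : ∀ x ∈ stInt a b, G x ≤ cB * Mab μ σ x₀ a x := by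
    intro x hx
    rw [hcB, cbar]
    split_ifs with hI
    · have hms := (aux_isOpen a b).measurableSet
      have h := aux_avg (f := c) (m := mDen μ σ x₀) (k := c x) (aux_Ioo_sub hx) measurableSet_Ioo
        hms (fun t ht => (hmp t ht).le) hI (aux_bdd_int hms hccont hI hcabs)
        (fun t ht => hcmono (aux_Ioo_sub hx ht) hx ht.2.le)
        (fun t ht => hcmono hx ht.1 (by
          by_contra hcon
          exact ht.2 ⟨ht.1.1, not_le.1 hcon⟩))
      have hpos : 0 < ∫ u in stInt a b, mDen μ σ x₀ u :=
        (hMp x hx).trans_le (setIntegral_mono_set hI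
          ((ae_restrict_iff' hms).2 (Eventually.of_forall fun t ht => (hmp t ht).le))
          (aux_Ioo_sub hx).eventuallyLE)
      rw [div_mul_eq_mul_div, le_div_iff₀ hpos]
      exact h
    · rw [Mab, ← integral_const_mul]
      exact setIntegral_mono_on (hcm x hx) ((hMfin x hx).const_mul cb) measurableSet_Ioo
        fun t ht => mul_le_mul_of_nonneg_right (hccb t (aux_Ioo_sub hx ht))
          (hmp t (aux_Ioo_sub hx ht)).le
  have hkey : ∀ x ∈ stInt a b,
      γ * G x + p * (sDen μ σ x₀ x)⁻¹ ≤ γ * cB * Mab μ σ x₀ a x := by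
    intro x hx
    have hstep : ∀ᶠ y in atB b, (γ * G x + p * (sDen μ σ x₀ x)⁻¹) / Mab μ σ x₀ a x
        ≤ γ * cB + p * (sDen μ σ x₀ y * Mab μ σ x₀ a y)⁻¹ := by
      filter_upwards [aux_atB_ev hx] with y hy
      have h := aux_avg (f := fun u => γ * c u + p * μ u) (m := mDen μ σ x₀)
        (k := γ * c x + p * μ x) (Ioo_subset_Ioo_right hy.1.le) measurableSet_Ioo
        measurableSet_Ioo (fun t ht => (hmp t (aux_Ioo_sub hy.2 ht)).le) (hMfin y hy.2)
        (hrm y hy.2)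
        (fun t ht => hmon (aux_Ioo_sub hx ht) hx ht.2.le)
        (fun t ht => hmon hx (aux_Ioo_sub hy.2 ht.1) (by
          by_contra hcon
          exact ht.2 ⟨ht.1.1, not_le.1 hcon⟩))
      rw [hrI x hx, hrI y hy.2] at h
      change _ * Mab μ σ x₀ a y ≤ _ * Mab μ σ x₀ a x at h
      have hMx := hMp x hx
      have hMy := hMp y hy.2
      have h2 : (γ * G x + p * (sDen μ σ x₀ x)⁻¹) / Mab μ σ x₀ a x
          ≤ (γ * G y + p * (sDen μ σ x₀ y)⁻¹) / Mab μ σ x₀ a y := by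
        rw [div_le_div_iff₀ hMx hMy]; exact h
      refine h2.trans ?_
      rw [div_le_iff₀ hMy, mul_inv, add_mul]
      have h3 := mul_le_mul_of_nonneg_left (hGle y hy.2) hγ.le
      have h4 : p * ((sDen μ σ x₀ y)⁻¹ * (Mab μ σ x₀ a y)⁻¹) * Mab μ σ x₀ a y
          = p * (sDen μ σ x₀ y)⁻¹ := by field_simp
      rw [h4]
      linarith
    have hlim : Tendsto (fun y => γ * cB + p * (sDen μ σ x₀ y * Mab μ σ x₀ a y)⁻¹) (atB b)
        (𝓝 (γ * cB + p * 0)) := (hsMb.inv_tendsto_atTop.const_mul p).const_add _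
    have := ge_of_tendsto hlim hstep
    rw [mul_zero, add_zero, div_le_iff₀ (hMp x hx)] at this
    exact this
  obtain ⟨w, y, haw, hwy, hyb, hF⟩ := hint
  have hy : y ∈ stInt a b := ⟨haw.trans hwy, hyb⟩
  have hw : w ∈ stInt a b := aux_st_between haw hwy.le hy
  have hsc := aux_s_cont hx₀ hμcont hσcont hσpos
  have hMc : ContinuousOn (fun v => Mab μ σ x₀ a v * sDen μ σ x₀ v) (stInt a b) :=
    (aux_prim_cont hMfin).mul hsc
  have hGc : ContinuousOn (fun v => G v * sDen μ σ x₀ v) (stInt a b) :=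
    (aux_prim_cont hcm).mul hsc
  have hii : ∀ f : ℝ → ℝ, ContinuousOn f (stInt a b) → ∀ u ∈ stInt a b, ∀ v ∈ stInt a b,
      IntervalIntegrable f volume u v := fun f hf u hu v hv =>
    (hf.mono (aux_uIcc hu hv)).intervalIntegrable
  have hxi : xiF μ σ x₀ a y - xiF μ σ x₀ a w = ∫ v in w..y, Mab μ σ x₀ a v * sDen μ σ x₀ v :=
    intervalIntegral.integral_interval_sub_left (hii _ hMc _ hx₀ _ hy) (hii _ hMc _ hx₀ _ hw)
  have hg : gF μ σ c x₀ a y - gF μ σ c x₀ a w = ∫ v in w..y, G v * sDen μ σ x₀ v :=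
    intervalIntegral.integral_interval_sub_left (hii _ hGc _ hx₀ _ hy) (hii _ hGc _ hx₀ _ hw)
  have hD : 0 < ∫ v in w..y, Mab μ σ x₀ a v * sDen μ σ x₀ v := by
    refine intervalIntegral.intervalIntegral_pos_of_pos_on (hii _ hMc _ hw _ hy) ?_ hwy
    intro t ht
    exact mul_pos (hMp t (aux_st_between (haw.trans ht.1) ht.2.le hy)) (aux_s_pos t)
  have hineq : ∫ v in w..y, (p + γ * (G v * sDen μ σ x₀ v)) ≤
      ∫ v in w..y, γ * cB * (Mab μ σ x₀ a v * sDen μ σ x₀ v) := by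
    refine intervalIntegral.integral_mono_on hwy.le
      (hii _ (continuousOn_const.add (hGc.const_mul γ)) _ hw _ hy)
      (hii _ (hMc.const_mul (γ * cB)) _ hw _ hy) ?_
    intro t ht
    have h := hkey t (aux_st_between (haw.trans_le ht.1) ht.2 hy)
    have hs := aux_s_pos (μ := μ) (σ := σ) (x₀ := x₀) t
    have h2 := mul_le_mul_of_nonneg_right h hs.le
    have h3 : (γ * G t + p * (sDen μ σ x₀ t)⁻¹) * sDen μ σ x₀ t
        = p + γ * (G t * sDen μ σ x₀ t) := by field_simp; ring
    linarith
  rw [intervalIntegral.integral_add (by simp) ((hii _ hGc _ hw _ hy).const_mul γ),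
    intervalIntegral.integral_const_mul, intervalIntegral.integral_const_mul,
    intervalIntegral.integral_const, smul_eq_mul] at hineq
  rw [FF, hxi, hg, lt_div_iff₀ hD] at hF
  linarith
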